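/- Let m ≥ 1 and let H = (h_{n,k})_{n,k∈ℕ} be an (m+2)-banded unit-lower-Hessenberg matrix of real numbers: h_{n,n+1} = 1 for all n, and h_{n,k} = 0 whenever k ≥ n+2 or k ≤ n−m−1. Suppose that for every n ≥ 1 the truncation H_n = (h_{i,j})_{0≤i,j≤n−1} is an oscillation matrix. Then for every n ≥ 1 the characteristic polynomial P_n(x) = det(x·I_n − H_n) has n distinct roots, all of which are real and positive; moreover the roots of consecutive polynomials strictly interlace: if x_1 < ⋯ < x_n are the roots of P_n and y_1 < ⋯ < y_{n+1} are the roots of P_{n+1}, then y_k < x_k < y_{k+1} for every 1 ≤ k ≤ n. -/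

import Mathlib

open Polynomial

/-- A real square matrix is totally positive if all its minors (with rows and columns
selected in strictly increasing order) are nonnegative. -/
def IsTotallyPos {n : ℕ} (A : Matrix (Fin n) (Fin n) ℝ) : Prop :=
  ∀ (p : ℕ) (ri cj : Fin p → Fin n), StrictMono ri → StrictMono cj →
    0 ≤ (A.submatrix ri cj).det

/-- A real square matrix is strictly totally positive if all its minors are positive. -/
def IsStrictlyTotallyPos {n : ℕ} (A : Matrix (Fin n) (Fin n) ℝ) : Prop :=
  ∀ (p : ℕ) (ri cj : Fin p → Fin n), StrictMono ri → StrictMono cj →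
    0 < (A.submatrix ri cj).det

/-- A real square matrix `A` is an oscillation matrix if it is totally positive and some
power `A^p` (`p ≥ 1`) is strictly totally positive. -/
def IsOscillation {n : ℕ} (A : Matrix (Fin n) (Fin n) ℝ) : Prop :=
  IsTotallyPos A ∧ ∃ p : ℕ, 1 ≤ p ∧ IsStrictlyTotallyPos (A ^ p)

/-!
For an index `i` for which `eᵢᵀ` is cyclic, every matrix commuting with `A` is a polynomial in `A`
determined by its `i`-th row, and on this commutant `M ↦ (M²)ᵢᵢ` is the quadratic form of the
Hankel matrix of moments `(A ^ (k + l))ᵢᵢ`. If `A` is strictly totally positive and `i` is the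
first or last index, Cauchy–Binet makes all leading minors of that Hankel matrix positive, so by
Sylvester's criterion the form is positive definite. Whatever commutes with `A` commutes with
`A ^ p`, so it is enough that some power of `A` is strictly totally positive.

Let `χ` be the characteristic polynomial, which is also the minimal polynomial by cyclicity, and
let `L f = f(A)ᵢᵢ` for the last index `i`. Then `f ↦ L (f²)` is positive definite on polynomials
modulo `χ`. A nonreal root `a + bi` of `χ` would give a factorization `χ = ((X - a)² + b²) q` and
hence `0 = L (χ q) = L (((X - a) q)²) + b² L (q²) > 0`. For a real root `y` put `q = χ / (X - y)`;
then `q² ≡ q(y) q` modulo `χ`, `q(y) = χ'(y)`, and `q(A)` is the adjugate of `y - A`, so that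
`L q` is the value at `y` of the characteristic polynomial of the leading truncation. Thus
`0 < L (q²)` says that this value has the sign of `χ'(y)`: the roots are simple and interlace.
Positivity of the roots follows by induction, the smallest root being controlled by the
determinant.
-/

section OscillationMatrix

open Matrix

section CauchyBinet

variable {ι R : Type*} [CommRing R] {r : ℕ}

theorem det_mul_eq_sum_det_submatrix_mul_prod [Fintype ι] (M : Matrix (Fin r) ι R)
    (N : Matrix ι (Fin r) R) :
    (M * N).det = ∑ f : Fin r → ι, (M.submatrix id f).det * ∏ i, N (f i) i := by
  classical
  simp only [det_apply', mul_apply, Finset.prod_univ_sum, Finset.mul_sum,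
    Fintype.piFinset_univ, Finset.sum_mul]
  rw [Finset.sum_comm]
  simp only [Finset.prod_mul_distrib, mul_assoc, submatrix_apply, id]

theorem sum_perm_det_submatrix_mul_prod (M : Matrix (Fin r) ι R) (N : Matrix ι (Fin r) R)
    (s : Fin r → ι) :
    ∑ σ : Equiv.Perm (Fin r), (M.submatrix id (s ∘ σ)).det * ∏ i, N (s (σ i)) i =
      (M.submatrix id s).det * (N.submatrix s id).det := by
  have hperm (σ : Equiv.Perm (Fin r)) :
      (M.submatrix id (s ∘ σ)).det = Equiv.Perm.sign σ * (M.submatrix id s).det :=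
    det_permute' σ (M.submatrix id s)
  simp only [hperm, det_apply' (N.submatrix s id), Finset.mul_sum, submatrix_apply, id]
  exact Finset.sum_congr rfl fun σ _ => by ring

theorem exists_orderEmbedding_comp_perm_eq [LinearOrder ι] {f : Fin r → ι}
    (hf : Function.Injective f) : ∃ (s : Fin r ↪o ι) (σ : Equiv.Perm (Fin r)), s ∘ σ = f :=
  ⟨.ofStrictMono _ ((Tuple.monotone_sort f).strictMono_of_injective
    (hf.comp (Tuple.sort f).injective)), (Tuple.sort f)⁻¹, by ext; simp⟩

theorem cauchyBinet [Fintype ι] [LinearOrder ι] (M : Matrix (Fin r) ι R)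
    (N : Matrix ι (Fin r) R) :
    (M * N).det = ∑ s : Fin r ↪o ι, (M.submatrix id s).det * (N.submatrix s id).det := by
  simp only [← sum_perm_det_submatrix_mul_prod, det_mul_eq_sum_det_submatrix_mul_prod M N]
  rw [← Fintype.sum_prod_type' fun (s : Fin r ↪o ι) (σ : Equiv.Perm (Fin r)) =>
    (M.submatrix id (s ∘ σ)).det * ∏ i, N (s (σ i)) i]
  refine (Finset.sum_of_injOn (fun p : (Fin r ↪o ι) × Equiv.Perm (Fin r) => p.1 ∘ p.2)
    ?_ (fun _ _ => Finset.mem_univ _) (fun f _ hf => ?_) fun _ _ => rfl).symm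
  · rintro ⟨s, σ⟩ - ⟨t, τ⟩ - h
    have hst : s = t := OrderEmbedding.range_inj.1 <| by
      simpa [Set.range_comp] using congrArg Set.range h
    subst hst
    exact Prod.ext rfl (Equiv.ext fun i => s.injective (congrFun h i))
  · have hf' : ¬ Function.Injective f := fun hinj => hf <| by
      obtain ⟨s, σ, h⟩ := exists_orderEmbedding_comp_perm_eq hinj
      exact ⟨(s, σ), by simp, h⟩
    obtain ⟨i, j, hij, hne⟩ := Function.not_injective_iff.1 hf'
    rw [det_zero_of_column_eq hne fun k => by simp [hij], zero_mul]

end CauchyBinet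

section Sylvester

open scoped ComplexOrder

theorem posDef_fromBlocks_of_det_pos {𝕜 m : Type*} [RCLike 𝕜] [Fintype m] [DecidableEq m]
    {A : Matrix m m 𝕜} {B : Matrix m (Fin 1) 𝕜} {D : Matrix (Fin 1) (Fin 1) 𝕜} (hA : A.PosDef)
    (hdet : 0 < (fromBlocks A B Bᴴ D).det) : (fromBlocks A B Bᴴ D).PosDef := by
  have := hA.isUnit.invertible
  have hschur : 0 < (D - Bᴴ * A⁻¹ * B).det := by
    rw [det_fromBlocks₁₁, invOf_eq_nonsing_inv] at hdet
    exact (pos_iff_pos_of_mul_pos hdet).1 hA.det_pos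
  have hpsd : (D - Bᴴ * A⁻¹ * B).PosSemidef := by
    have hdiag : D - Bᴴ * A⁻¹ * B = diagonal fun _ => (D - Bᴴ * A⁻¹ * B).det := by
      ext i j
      simp [Subsingleton.elim i 0, Subsingleton.elim j 0]
    rw [hdiag]
    exact PosSemidef.diagonal fun _ => hschur.le
  exact ((PosDef.fromBlocks₁₁ B D hA).2 hpsd).posDef_iff_det_ne_zero.2 hdet.ne'

theorem posDef_of_forall_det_pos {𝕜 : Type*} [RCLike 𝕜] {n : ℕ} {A : Matrix (Fin n) (Fin n) 𝕜}
    (hA : A.IsHermitian)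
    (hdet : ∀ r (hr : r ≤ n), 0 < (A.submatrix (Fin.castLE hr) (Fin.castLE hr)).det) :
    A.PosDef := by
  induction n with
  | zero => exact .of_dotProduct_mulVec_pos hA fun x hx => absurd (Subsingleton.elim x 0) hx
  | succ n ih =>
    have hlead : (A.submatrix Fin.castSucc Fin.castSucc).PosDef :=
      ih (hA.submatrix _) fun r hr => hdet r (hr.trans n.le_succ)
    let e : Fin n ⊕ Fin 1 ≃ Fin (n + 1) := finSumFinEquiv
    have hblock : A.submatrix e e = fromBlocks (A.submatrix Fin.castSucc Fin.castSucc)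
        (A.submatrix Fin.castSucc (Fin.natAdd n)) (A.submatrix Fin.castSucc (Fin.natAdd n))ᴴ
        (A.submatrix (Fin.natAdd n) (Fin.natAdd n)) := by
      ext (i | i) (j | j) <;> simp [e, hA.apply, Fin.castSucc]
    have hpd : (A.submatrix e e).PosDef := hblock ▸ posDef_fromBlocks_of_det_pos hlead
      (by rw [← hblock, det_submatrix_equiv_self]; exact hdet (n + 1) le_rfl)
    simpa using hpd.submatrix e.symm.injective

end Sylvester

theorem card_le_natDegree_of_aeval_eq_zero {K S ι : Type*} [Field K] [Ring S] [Algebra K S]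
    [Fintype ι] {a : S} {f : K[X]} (hf0 : f ≠ 0) (hf : aeval a f = 0) {g : ι → K[X]}
    (hg : LinearIndependent K fun i => aeval a (g i)) : Fintype.card ι ≤ f.natDegree := by
  have hspan (h : K[X]) (hh : h ∈ Ideal.span {f}) : aeval a h = 0 := by
    obtain ⟨q, rfl⟩ := Ideal.mem_span_singleton.1 hh
    rw [map_mul, hf, zero_mul]
  have hquot : LinearIndependent K (AdjoinRoot.mk f ∘ g) :=
    .of_comp (Ideal.Quotient.liftₐ (Ideal.span {f}) (aeval a) hspan).toLinearMap hg
  have : Module.Finite K (AdjoinRoot f) := (AdjoinRoot.powerBasis hf0).finite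
  exact hquot.fintype_card_le_finrank.trans_eq finrank_quotient_span_eq_natDegree

section PositiveFunctional

theorem pos_mul_eval_derivative_of_isRoot {K : Type*} [Field K] [LinearOrder K]
    [IsStrictOrderedRing K] {χ : K[X]} {L : K[X] →ₗ[K] K} (hχ : χ ≠ 0)
    (hker : ∀ f, χ ∣ f → L f = 0) (hpos : ∀ f, ¬ χ ∣ f → 0 < L (f * f)) {y : K}
    (hy : χ.IsRoot y) : 0 < L (χ /ₘ (X - C y)) * χ.derivative.eval y := by
  set q := χ /ₘ (X - C y)
  have hχq : (X - C y) * q = χ := mul_divByMonic_eq_iff_isRoot.2 hy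
  have hndvd : ¬ χ ∣ q :=
    fun h => not_lt_of_ge (degree_le_of_dvd h (right_ne_zero_of_mul (hχq ▸ hχ)))
      (degree_divByMonic_lt _ _ hχ (by simp))
  have hderiv : χ.derivative.eval y = q.eval y := by simp [← hχq]
  have hsq : L (q * q) = q.eval y * L q := by
    have hdvd : χ ∣ (q - C (q.eval y)) * q := by
      nth_rw 1 [← hχq]
      exact mul_dvd_mul_right X_sub_C_dvd_sub_C_eval q
    have h := hker _ hdvd
    rwa [sub_mul, ← smul_eq_C_mul, map_sub, map_smul, smul_eq_mul, sub_eq_zero] at h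
  rw [hderiv, mul_comm, ← hsq]
  exact hpos q hndvd

theorem splits_of_forall_mul_self_pos {χ : ℝ[X]} {L : ℝ[X] →ₗ[ℝ] ℝ} (hχ : χ ≠ 0)
    (hker : ∀ f, χ ∣ f → L f = 0) (hpos : ∀ f, ¬ χ ∣ f → 0 < L (f * f)) : χ.Splits := by
  have hreal (z : ℂ) (hz : aeval z χ = 0) : z.im = 0 := by
    by_contra him
    obtain ⟨q, hq⟩ := χ.quadratic_dvd_of_aeval_eq_zero_im_ne_zero hz him
    have hq0 : q ≠ 0 := right_ne_zero_of_mul (hq ▸ hχ)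
    have hmonic : (X ^ 2 - C (2 * z.re) * X + C (‖z‖ ^ 2)).Monic := by monicity!
    have hndvd {f : ℝ[X]} (hf0 : f ≠ 0) (hf : f.natDegree < 2) : ¬ χ ∣ f * q := by
      rw [hq, mul_dvd_mul_iff_right hq0]
      refine hmonic.not_dvd_of_natDegree_lt hf0 (hf.trans_eq (Eq.symm ?_))
      compute_degree!
    have hsq : ((X - C z.re) * q) * ((X - C z.re) * q) + (z.im ^ 2) • (q * q) = χ * q := by
      have hnorm : ‖z‖ ^ 2 = z.re ^ 2 + z.im ^ 2 := by
        rw [← Complex.normSq_eq_norm_sq, Complex.normSq_apply]; ring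
      rw [hq, smul_eq_C_mul]
      simp only [hnorm, map_add, map_mul, map_pow, map_ofNat]
      ring
    have hlin := hpos _ (hndvd (X_sub_C_ne_zero z.re) (by simp))
    have hconst : 0 < L (q * q) := by simpa using hpos _ (hndvd one_ne_zero (by simp))
    have hzero := hker _ (dvd_mul_right χ q)
    rw [← hsq, map_add, map_smul, smul_eq_mul] at hzero
    exact (add_pos_of_pos_of_nonneg hlin (by positivity)).ne' hzero
  refine Splits.of_splits_map (algebraMap ℝ ℂ) (IsAlgClosed.splits _) fun z hz => ?_
  have hroot : aeval z χ = 0 := by simpa using (mem_roots'.1 hz).2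
  exact ⟨z.re, Complex.ext rfl (hreal z hroot).symm⟩

end PositiveFunctional

theorem exists_strictMono_eq_prod_X_sub_C {K : Type*} [Field K] [LinearOrder K] {f : K[X]} {n : ℕ}
    (hmonic : f.Monic) (hdeg : f.natDegree = n) (hsplits : f.Splits)
    (hsimple : ∀ y, f.IsRoot y → f.derivative.eval y ≠ 0) :
    ∃ y : Fin n → K, StrictMono y ∧ f = ∏ k, (X - C (y k)) := by
  have hnodup : f.roots.Nodup := by
    refine Multiset.nodup_iff_count_le_one.2 fun y => ?_
    rw [count_roots]
    by_contra! h
    obtain ⟨hy, hy'⟩ := (one_lt_rootMultiplicity_iff_isRoot hmonic.ne_zero).1 h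
    exact hsimple y hy hy'
  have hcard : f.roots.toFinset.card = n := by
    rw [Multiset.toFinset_card_of_nodup hnodup, ← hsplits.natDegree_eq_card_roots, hdeg]
  refine ⟨f.roots.toFinset.orderEmbOfFin hcard, OrderEmbedding.strictMono _, ?_⟩
  calc f = ∏ a ∈ f.roots.toFinset, (X - C a) := by
        rw [Finset.prod, Multiset.toFinset_val, hnodup.dedup]
        exact hsplits.eq_prod_roots_of_monic hmonic
    _ = ∏ k, (X - C (f.roots.toFinset.orderEmbOfFin hcard k)) := by
        conv_lhs => rw [← Finset.map_orderEmbOfFin_univ _ hcard]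
        exact Finset.prod_map _ _ _

section Interlacing

variable {K : Type*} [Field K] [LinearOrder K] [IsStrictOrderedRing K] {n : ℕ}

theorem prod_erase_mul_prod_erase_neg {y : Fin (n + 1) → K} (hy : StrictMono y) (k : Fin n) :
    (∏ j ∈ Finset.univ.erase k.castSucc, (y k.castSucc - y j)) *
      ∏ j ∈ Finset.univ.erase k.succ, (y k.succ - y j) < 0 := by
  have hlt : y k.castSucc < y k.succ := hy Fin.castSucc_lt_succ
  have hne : k.castSucc ≠ k.succ := Fin.castSucc_lt_succ.ne
  rw [← Finset.mul_prod_erase (Finset.univ.erase k.castSucc) _ (a := k.succ) (by simp [hne.symm]),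
    ← Finset.mul_prod_erase (Finset.univ.erase k.succ) _ (a := k.castSucc) (by simp [hne]),
    Finset.erase_right_comm, mul_mul_mul_comm, ← Finset.prod_mul_distrib]
  refine mul_neg_of_neg_of_pos (mul_neg_of_neg_of_pos (by simpa) (by simpa))
    (Finset.prod_pos fun j hj => ?_)
  obtain ⟨hj1, hj2⟩ : j ≠ k.castSucc ∧ j ≠ k.succ := by simpa using hj
  rcases lt_or_gt_of_ne hj1 with h | h
  · exact mul_pos (sub_pos.2 (hy h)) (sub_pos.2 ((hy h).trans hlt))
  · have h' : k.succ < j := lt_of_le_of_ne (Fin.castSucc_lt_iff_succ_le.1 h) hj2.symm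
    exact mul_pos_of_neg_of_neg (sub_neg.2 (hlt.trans (hy h'))) (sub_neg.2 (hy h'))

theorem interlace_of_forall_exists_mem_Ioo {α : Type*} [LinearOrder α] {x : Fin n → α}
    {y : Fin (n + 1) → α} (hx : StrictMono x) (hy : StrictMono y)
    (h : ∀ k : Fin n, ∃ j, x j ∈ Set.Ioo (y k.castSucc) (y k.succ)) (k : Fin n) :
    x k ∈ Set.Ioo (y k.castSucc) (y k.succ) := by
  choose σ hσ using h
  have hmono : StrictMono σ := fun i j hij => hx.lt_iff_lt.1 <|
    ((hσ i).2.trans_le (hy.monotone (Fin.succ_le_castSucc_iff.2 hij))).trans (hσ j).1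
  simpa [hmono.eq_id] using hσ k

theorem interlace_of_eval_mul_eval_derivative_pos {x : Fin n → K} {y : Fin (n + 1) → K}
    (hx : StrictMono x) (hy : StrictMono y) {f g : K[X]} (hf : f = ∏ j, (X - C (x j)))
    (hg : g = ∏ j, (X - C (y j))) (hpos : ∀ k, 0 < f.eval (y k) * g.derivative.eval (y k))
    (k : Fin n) : x k ∈ Set.Ioo (y k.castSucc) (y k.succ) := by
  refine interlace_of_forall_exists_mem_Ioo hx hy (fun k => ?_) k
  have hderiv (k : Fin (n + 1)) : g.derivative.eval (y k) =
      ∏ j ∈ Finset.univ.erase k, (y k - y j) := by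
    simpa [hg, Lagrange.nodal, eval_prod] using
      Lagrange.eval_nodal_derivative_eval_node_eq (v := y) (Finset.mem_univ k)
  have hsign : f.eval (y k.castSucc) * f.eval (y k.succ) < 0 := by
    have h := mul_pos (hpos k.castSucc) (hpos k.succ)
    rw [mul_mul_mul_comm, hderiv, hderiv] at h
    exact neg_of_mul_pos_left h (prod_erase_mul_prod_erase_neg hy k).le
  obtain ⟨j, hj⟩ : ∃ j, (y k.castSucc - x j) * (y k.succ - x j) < 0 := by
    by_contra! h
    refine hsign.not_ge ?_
    simpa [hf, eval_prod, ← Finset.prod_mul_distrib] using Finset.prod_nonneg fun j _ => h j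
  have hlt : y k.castSucc < y k.succ := hy Fin.castSucc_lt_succ
  rcases mul_neg_iff.1 hj with h | h
  · linarith
  · exact ⟨j, sub_neg.1 h.1, sub_pos.1 h.2⟩

end Interlacing

section Resolvent

variable {ι R : Type*} [CommRing R] [Fintype ι] [DecidableEq ι]

theorem scalar_sub_mul_aeval_divByMonic (A : Matrix ι ι R) (t : R) :
    (scalar ι t - A) * aeval A (A.charpoly /ₘ (X - C t)) = A.charpoly.eval t • 1 := by
  have h := congrArg (aeval A) (X_sub_C_mul_divByMonic_eq_sub_modByMonic A.charpoly t)
  rw [modByMonic_X_sub_C_eq_C_eval, map_mul, map_sub, map_sub, aeval_X, aeval_C, aeval_C,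
    aeval_self_charpoly, zero_sub, Algebra.algebraMap_eq_smul_one,
    Algebra.algebraMap_eq_smul_one] at h
  rw [← neg_sub A, neg_mul, scalar_apply, ← smul_one_eq_diagonal, h, neg_neg]

theorem adjugate_charmatrix_eq_aeval (A : Matrix ι ι R) :
    (charmatrix A).adjugate = aeval (A.map C) (A.charpoly.map C /ₘ (X - C X)) := by
  have hmul : charmatrix A * aeval (A.map C) (A.charpoly.map C /ₘ (X - C X)) =
      A.charpoly • (1 : Matrix ι ι R[X]) := by
    simpa [charpoly_map, charmatrix, eval_map] using scalar_sub_mul_aeval_divByMonic (A.map C) X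
  have hcancel : A.charpoly • aeval (A.map C) (A.charpoly.map C /ₘ (X - C X)) =
      A.charpoly • (charmatrix A).adjugate := by
    simpa [← Matrix.mul_assoc, adjugate_mul, charpoly] using
      congrArg ((charmatrix A).adjugate * ·) hmul
  ext1 i j
  exact A.charpoly_monic.isRegular.left (congrFun₂ hcancel i j).symm

-- The determinant `χ(t)` may be a zero divisor, so the identity is specialised from the generic
-- value `t = X`, for which the determinant is the monic polynomial `χ` and can be cancelled.
theorem adjugate_scalar_sub_eq_aeval (A : Matrix ι ι R) (t : R) :
    (scalar ι t - A).adjugate = aeval A (A.charpoly /ₘ (X - C t)) := by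
  have h := congrArg (evalRingHom t).mapMatrix (adjugate_charmatrix_eq_aeval A)
  have hA : (evalRingHom t).mapMatrix (A.map C) = A := by ext; simp
  have hchar : (evalRingHom t).mapMatrix (charmatrix A) = scalar ι t - A := by
    ext i j
    simp [charmatrix_apply, diagonal_apply, apply_ite (eval t)]
  have hχ : (A.charpoly.map C).map (evalRingHom t) = A.charpoly := by ext; simp
  rw [RingHom.map_adjugate, hchar] at h
  rw [h, map_aeval_eq_aeval_map (φ := evalRingHom t), hA, map_divByMonic _ (monic_X_sub_C X), hχ]
  · simp
  · refine RingHom.ext fun f => ?_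
    ext i j
    simp [algebraMap_matrix_apply, apply_ite (eval t)]

theorem eval_charpoly_submatrix_castSucc {n : ℕ} (A : Matrix (Fin (n + 1)) (Fin (n + 1)) R)
    (t : R) :
    (A.submatrix Fin.castSucc Fin.castSucc).charpoly.eval t =
      (scalar (Fin (n + 1)) t - A).adjugate (Fin.last n) (Fin.last n) := by
  have hsub : (scalar (Fin (n + 1)) t - A).submatrix Fin.castSucc Fin.castSucc =
      scalar (Fin n) t - A.submatrix Fin.castSucc Fin.castSucc := by
    ext i j
    simp [diagonal_apply]
  rw [eval_charpoly, adjugate_fin_succ_eq_det_submatrix, Fin.succAbove_last, hsub,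
    Even.neg_one_pow ⟨_, rfl⟩, one_mul]

end Resolvent

theorem det_eq_prod_of_charpoly_eq_prod {R : Type*} [CommRing R] [IsDomain R] {n : ℕ}
    {A : Matrix (Fin n) (Fin n) R} {y : Fin n → R} (h : A.charpoly = ∏ k, (X - C (y k))) :
    A.det = ∏ k, y k := by
  rw [det_eq_prod_roots_charpoly_of_splits (h ▸ .prod fun k _ => .X_sub_C _), h]
  simp [roots_prod _ _ (Finset.prod_ne_zero_iff.2 fun k _ => X_sub_C_ne_zero (y k)), List.prod_ofFn]

theorem forall_pos_of_prod_pos {K : Type*} [Field K] [LinearOrder K] [IsStrictOrderedRing K]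
    {n : ℕ} {y : Fin (n + 1) → K} (hprod : 0 < ∏ k, y k) (hsucc : ∀ k : Fin n, 0 < y k.succ)
    (k : Fin (n + 1)) : 0 < y k := by
  rw [Fin.prod_univ_succ] at hprod
  exact Fin.cases (pos_of_mul_pos_left hprod (Finset.prod_nonneg fun k _ => (hsucc k).le)) hsucc k

section Krylov

variable {ι R : Type*} [CommRing R] [Fintype ι] [DecidableEq ι]

/-- The Krylov matrix of `A` at the index `i`, with rows `eᵢᵀ`, `eᵢᵀ A`, …, `eᵢᵀ A ^ (r - 1)`. It
encodes the first `r` iterates of the covector `eᵢᵀ`; full rank means that `eᵢᵀ` is cyclic. -/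
def krylov (A : Matrix ι ι R) (i : ι) (r : ℕ) : Matrix (Fin r) ι R :=
  of fun k j => (A ^ (k : ℕ)) i j

/-- The Hankel matrix `((A ^ (k + l))ᵢᵢ)` of moments of `A` at the index `i`, that is, the Gram
matrix of the powers of `A` for the bilinear form `(M, N) ↦ (M * N)ᵢᵢ`. -/
def momentMatrix (A : Matrix ι ι R) (i : ι) (r : ℕ) : Matrix (Fin r) (Fin r) R :=
  of fun k l => (A ^ (k + l : ℕ)) i i

theorem momentMatrix_eq_krylov_mul (A : Matrix ι ι R) (i : ι) (r : ℕ) :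
    momentMatrix A i r = krylov A i r * (krylov Aᵀ i r)ᵀ := by
  ext k l
  simp [momentMatrix, krylov, mul_apply, pow_add, ← transpose_pow]

theorem isSymm_momentMatrix (A : Matrix ι ι R) (i : ι) (r : ℕ) :
    (momentMatrix A i r).IsSymm := by
  ext k l
  simp [momentMatrix, add_comm]

theorem sum_smul_pow_apply_eq_vecMul_krylov (A : Matrix ι ι R) (i : ι) {r : ℕ} (c : Fin r → R) :
    (∑ k, c k • A ^ (k : ℕ)) i = c ᵥ* krylov A i r := by
  ext j
  simp [Matrix.sum_apply, krylov, vecMul, dotProduct]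

theorem det_krylov_submatrix_eq_zero (A : Matrix ι ι R) {i : ι} {r : ℕ} {s : Fin (r + 1) → ι}
    (hs : ∀ j, s j ≠ i) : ((krylov A i (r + 1)).submatrix id s).det = 0 :=
  det_eq_zero_of_row_eq_zero 0 fun j => by simp [krylov, (hs j).symm]

theorem det_krylov_succ_submatrix (A : Matrix ι ι R) {i : ι} {r : ℕ} {s : Fin (r + 1) → ι}
    (hs : Function.Injective s) (h0 : s 0 = i) :
    ((krylov A i (r + 1)).submatrix id s).det =
      (krylov A i r * A.submatrix id (s ∘ Fin.succ)).det := by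
  have hne (j : Fin r) : i ≠ s j.succ := h0 ▸ hs.ne (Fin.succ_ne_zero j).symm
  have hminor : ((krylov A i (r + 1)).submatrix id s).submatrix Fin.succ (Fin.succAbove 0) =
      krylov A i r * A.submatrix id (s ∘ Fin.succ) := by
    ext k j
    simp [krylov, mul_apply, pow_succ]
  rw [det_succ_row_zero, Fin.sum_univ_succ, hminor]
  simp [krylov, h0, hne]

theorem eq_zero_of_commute_of_row_eq_zero {n : ℕ} {A M : Matrix (Fin n) (Fin n) R} {i : Fin n}
    (hA : IsUnit (krylov A i n).det) (hcomm : Commute M A) (hM : M i = 0) : M = 0 := by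
  have hmul : krylov A i n * M = 0 := by
    ext k j
    calc (krylov A i n * M) k j = (A ^ (k : ℕ) * M) i j := rfl
      _ = (M i ᵥ* A ^ (k : ℕ)) j := by rw [← (hcomm.pow_right k).eq]; rfl
      _ = 0 := by simp [hM]
  simpa [nonsing_inv_mul_cancel_left _ _ hA] using congrArg ((krylov A i n)⁻¹ * ·) hmul

theorem exists_eq_sum_smul_pow_of_commute {n : ℕ} {A M : Matrix (Fin n) (Fin n) R} {i : Fin n}
    (hA : IsUnit (krylov A i n).det) (hcomm : Commute M A) :
    ∃ c : Fin n → R, M = ∑ k, c k • A ^ (k : ℕ) := by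
  set c := M i ᵥ* (krylov A i n)⁻¹ with hc
  have hrow : (∑ k, c k • A ^ (k : ℕ)) i = M i := by
    rw [sum_smul_pow_apply_eq_vecMul_krylov, hc, vecMul_vecMul, nonsing_inv_mul _ hA, vecMul_one]
  have hsum : Commute (∑ k, c k • A ^ (k : ℕ)) A :=
    Commute.sum_left _ _ _ fun k _ => ((Commute.refl A).pow_left _).smul_left _
  refine ⟨c, sub_eq_zero.1 (eq_zero_of_commute_of_row_eq_zero hA (hcomm.sub_left hsum) ?_)⟩
  exact sub_eq_zero.2 hrow.symm

theorem sum_smul_pow_mul_self_apply (A : Matrix ι ι R) (i : ι) {r : ℕ} (c : Fin r → R) :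
    ((∑ k, c k • A ^ (k : ℕ)) * ∑ k, c k • A ^ (k : ℕ)) i i =
      c ⬝ᵥ momentMatrix A i r *ᵥ c := by
  have hcol : (∑ k, c k • A ^ (k : ℕ))ᵀ i = c ᵥ* krylov Aᵀ i r := by
    rw [← sum_smul_pow_apply_eq_vecMul_krylov]
    simp [transpose_sum]
  calc _ = (∑ k, c k • A ^ (k : ℕ)) i ⬝ᵥ (∑ k, c k • A ^ (k : ℕ))ᵀ i := rfl
    _ = c ⬝ᵥ momentMatrix A i r *ᵥ c := by
      rw [hcol, sum_smul_pow_apply_eq_vecMul_krylov, momentMatrix_eq_krylov_mul,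
        ← mulVec_transpose (krylov Aᵀ i r), ← dotProduct_mulVec, mulVec_mulVec]

theorem minpoly_eq_charpoly_of_det_krylov_pow_ne_zero {K : Type*} [Field K] {n p : ℕ}
    {A : Matrix (Fin n) (Fin n) K} {i : Fin n} (h : (krylov (A ^ p) i n).det ≠ 0) :
    minpoly K A = A.charpoly := by
  have hlin : LinearIndependent K fun k : Fin n => aeval A ((X ^ p : K[X]) ^ (k : ℕ)) := by
    simp only [map_pow, aeval_X]
    exact .of_comp (LinearMap.proj (R := K) (φ := fun _ => Fin n → K) i)
      (linearIndependent_rows_of_det_ne_zero h)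
  have hdeg := card_le_natDegree_of_aeval_eq_zero (minpoly.ne_zero (isIntegral A))
    (minpoly.aeval K A) hlin
  exact (eq_of_monic_of_dvd_of_natDegree_le (minpoly.monic (isIntegral A)) A.charpoly_monic
    A.minpoly_dvd_charpoly (by rwa [charpoly_natDegree_eq_dim])).symm

end Krylov

theorem IsStrictlyTotallyPos.transpose {n : ℕ} {B : Matrix (Fin n) (Fin n) ℝ}
    (hB : IsStrictlyTotallyPos B) : IsStrictlyTotallyPos Bᵀ := fun p ri cj hri hcj => by
  rw [← transpose_submatrix, det_transpose]
  exact hB p cj ri hcj hri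

theorem IsStrictlyTotallyPos.reindex_revPerm {n : ℕ} {B : Matrix (Fin n) (Fin n) ℝ}
    (hB : IsStrictlyTotallyPos B) :
    IsStrictlyTotallyPos (reindexAlgEquiv ℝ ℝ Fin.revPerm B) := fun p ri cj hri hcj => by
  have hrev {s : Fin p → Fin n} (hs : StrictMono s) : StrictMono (Fin.rev ∘ s ∘ Fin.rev) :=
    fun i j hij => Fin.rev_lt_rev.2 (hs (Fin.rev_lt_rev.2 hij))
  have hminor := hB p _ _ (hrev hri) (hrev hcj)
  rw [← det_submatrix_equiv_self Fin.revPerm] at hminor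
  simpa [Function.comp_def] using hminor

section LeadingMoments

variable {n : ℕ} {B M : Matrix (Fin (n + 1)) (Fin (n + 1)) ℝ}

theorem IsStrictlyTotallyPos.det_krylov_submatrix_nonneg_and_pos
    (hB : IsStrictlyTotallyPos B) (r : ℕ) :
    (∀ s : Fin r → Fin (n + 1), StrictMono s → 0 ≤ ((krylov B 0 r).submatrix id s).det) ∧
      ∀ hr : r ≤ n + 1, 0 < ((krylov B 0 r).submatrix id (Fin.castLE hr)).det := by
  induction r with
  | zero => simp
  | succ r ih =>
    have hpos {s : Fin (r + 1) → Fin (n + 1)} (hs : StrictMono s) (h0 : s 0 = 0) :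
        0 < ((krylov B 0 (r + 1)).submatrix id s).det := by
      have hr : r ≤ n + 1 :=
        (Nat.le_succ r).trans (by simpa using Fintype.card_le_of_injective s hs.injective)
      have hsucc : StrictMono (s ∘ Fin.succ) := hs.comp Fin.strictMono_succ
      rw [det_krylov_succ_submatrix B hs.injective h0, cauchyBinet]
      exact Finset.sum_pos'
        (fun t _ => mul_nonneg (ih.1 t t.strictMono) (hB r t _ t.strictMono hsucc).le)
        ⟨Fin.castLEOrderEmb hr, Finset.mem_univ _,
          mul_pos (ih.2 hr) (hB r _ _ (Fin.strictMono_castLE hr) hsucc)⟩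
    refine ⟨fun s hs => ?_, fun hr => hpos (Fin.strictMono_castLE hr) rfl⟩
    by_cases h0 : s 0 = 0
    · exact (hpos hs h0).le
    · refine (det_krylov_submatrix_eq_zero B fun j hj => h0 ?_).ge
      exact Fin.le_zero_iff.1 (hj ▸ hs.monotone (Fin.zero_le j))

theorem IsStrictlyTotallyPos.det_krylov_pos (hB : IsStrictlyTotallyPos B) :
    0 < (krylov B 0 (n + 1)).det :=
  (hB.det_krylov_submatrix_nonneg_and_pos (n + 1)).2 le_rfl

theorem IsStrictlyTotallyPos.det_momentMatrix_pos {r : ℕ} (hB : IsStrictlyTotallyPos B)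
    (hr : r ≤ n + 1) : 0 < (momentMatrix B 0 r).det := by
  have hcol (s : Fin r → Fin (n + 1)) : ((krylov Bᵀ 0 r)ᵀ.submatrix s id).det =
      ((krylov Bᵀ 0 r).submatrix id s).det := by
    rw [← transpose_submatrix, det_transpose]
  obtain ⟨hrow_nonneg, hrow_pos⟩ := hB.det_krylov_submatrix_nonneg_and_pos r
  obtain ⟨hcol_nonneg, hcol_pos⟩ := hB.transpose.det_krylov_submatrix_nonneg_and_pos r
  rw [momentMatrix_eq_krylov_mul, cauchyBinet]
  simp only [hcol]
  exact Finset.sum_pos'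
    (fun s _ => mul_nonneg (hrow_nonneg s s.strictMono) (hcol_nonneg s s.strictMono))
    ⟨Fin.castLEOrderEmb hr, Finset.mem_univ _, mul_pos (hrow_pos hr) (hcol_pos hr)⟩

theorem IsStrictlyTotallyPos.posDef_momentMatrix (hB : IsStrictlyTotallyPos B) :
    (momentMatrix B 0 (n + 1)).PosDef :=
  posDef_of_forall_det_pos (isSymm_momentMatrix B 0 (n + 1)) fun _ hr => hB.det_momentMatrix_pos hr

theorem IsStrictlyTotallyPos.mul_self_zero_zero_pos (hB : IsStrictlyTotallyPos B)
    (hcomm : Commute M B) (hM : M ≠ 0) : 0 < (M * M) 0 0 := by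
  obtain ⟨c, rfl⟩ := exists_eq_sum_smul_pow_of_commute hB.det_krylov_pos.ne'.isUnit hcomm
  have hc : c ≠ 0 := fun h => hM (by simp [h])
  rw [sum_smul_pow_mul_self_apply]
  exact hB.posDef_momentMatrix.dotProduct_mulVec_pos hc

theorem IsStrictlyTotallyPos.mul_self_last_last_pos (hB : IsStrictlyTotallyPos B)
    (hcomm : Commute M B) (hM : M ≠ 0) : 0 < (M * M) (Fin.last n) (Fin.last n) := by
  have hrev := hB.reindex_revPerm.mul_self_zero_zero_pos
    (hcomm.map (reindexAlgEquiv ℝ ℝ Fin.revPerm))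
    ((EmbeddingLike.map_ne_zero_iff (f := reindexAlgEquiv ℝ ℝ Fin.revPerm)).2 hM)
  rw [← map_mul] at hrev
  simpa using hrev

end LeadingMoments

section MomentFunctional

variable {ι R : Type*} [CommRing R] [Fintype ι] [DecidableEq ι]

/-- The linear functional `f ↦ f(A)ᵢᵢ`, whose values on monomials are the moments of `A`. -/
noncomputable def momentFunctional (A : Matrix ι ι R) (i : ι) : R[X] →ₗ[R] R :=
  entryLinearMap R R i i ∘ₗ (aeval A).toLinearMap

theorem momentFunctional_eq_zero {A : Matrix ι ι R} (i : ι) {f : R[X]} (hf : A.charpoly ∣ f) :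
    momentFunctional A i f = 0 := by
  obtain ⟨g, rfl⟩ := hf
  simp [momentFunctional, aeval_self_charpoly]

theorem momentFunctional_mul_self_pos {n p : ℕ}
    {A : Matrix (Fin (n + 1)) (Fin (n + 1)) ℝ} (hA : IsStrictlyTotallyPos (A ^ p)) {f : ℝ[X]}
    (hf : ¬ A.charpoly ∣ f) : 0 < momentFunctional A (Fin.last n) (f * f) := by
  have hcomm : Commute (aeval A f) (A ^ p) := by
    simpa using (Commute.all f (X ^ p)).map (aeval A)
  rw [← minpoly_eq_charpoly_of_det_krylov_pow_ne_zero hA.det_krylov_pos.ne', minpoly.dvd_iff] at hf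
  simpa [momentFunctional] using hA.mul_self_last_last_pos hcomm hf

end MomentFunctional

section Roots

variable {n p : ℕ}

theorem eval_charpoly_submatrix_castSucc_mul_eval_derivative_pos
    {A : Matrix (Fin (n + 1)) (Fin (n + 1)) ℝ} (hA : IsStrictlyTotallyPos (A ^ p)) {y : ℝ}
    (hy : A.charpoly.IsRoot y) :
    0 < (A.submatrix Fin.castSucc Fin.castSucc).charpoly.eval y *
      A.charpoly.derivative.eval y := by
  rw [eval_charpoly_submatrix_castSucc, adjugate_scalar_sub_eq_aeval]
  exact pos_mul_eval_derivative_of_isRoot (L := momentFunctional A (Fin.last n))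
    A.charpoly_monic.ne_zero (fun _ => momentFunctional_eq_zero _)
    (fun _ => momentFunctional_mul_self_pos hA) hy

theorem exists_strictMono_charpoly_eq_prod {A : Matrix (Fin (n + 1)) (Fin (n + 1)) ℝ}
    (hA : IsStrictlyTotallyPos (A ^ p)) :
    ∃ y : Fin (n + 1) → ℝ, StrictMono y ∧ A.charpoly = ∏ k, (X - C (y k)) := by
  have hsplits : A.charpoly.Splits :=
    splits_of_forall_mul_self_pos (L := momentFunctional A (Fin.last n))
      A.charpoly_monic.ne_zero (fun _ => momentFunctional_eq_zero _)
      (fun _ => momentFunctional_mul_self_pos hA)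
  exact exists_strictMono_eq_prod_X_sub_C A.charpoly_monic (by simp) hsplits fun y hy =>
    right_ne_zero_of_mul (eval_charpoly_submatrix_castSucc_mul_eval_derivative_pos hA hy).ne'

theorem interlace_of_charpoly_eq_prod {A : Matrix (Fin (n + 1)) (Fin (n + 1)) ℝ}
    (hA : IsStrictlyTotallyPos (A ^ p)) {x : Fin n → ℝ} {y : Fin (n + 1) → ℝ}
    (hx : StrictMono x) (hy : StrictMono y)
    (hAx : (A.submatrix Fin.castSucc Fin.castSucc).charpoly = ∏ k, (X - C (x k)))
    (hAy : A.charpoly = ∏ k, (X - C (y k))) (k : Fin n) :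
    x k ∈ Set.Ioo (y k.castSucc) (y k.succ) := by
  refine interlace_of_eval_mul_eval_derivative_pos hx hy hAx hAy (fun j => ?_) k
  refine eval_charpoly_submatrix_castSucc_mul_eval_derivative_pos hA ?_
  simp [hAy, eval_prod, Finset.prod_eq_zero_iff, sub_eq_zero]

theorem IsOscillation.det_pos {A : Matrix (Fin n) (Fin n) ℝ} (hA : IsOscillation A) :
    0 < A.det := by
  obtain ⟨hTP, p, hp, hSTP⟩ := hA
  have hpow : 0 < A.det ^ p := by
    simpa [det_pow] using hSTP n id id strictMono_id strictMono_id
  have hnonneg : 0 ≤ A.det := by simpa using hTP n id id strictMono_id strictMono_id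
  exact hnonneg.lt_of_ne' fun h => hpow.ne' (by simp [h, Nat.one_le_iff_ne_zero.1 hp])

end Roots

end OscillationMatrix

/-- The `n`-th truncation `Hₙ = (h i j)_{i, j < n}` of an infinite matrix. -/
def truncation {R : Type*} (h : ℕ → ℕ → R) (n : ℕ) : Matrix (Fin n) (Fin n) R :=
  Matrix.of fun i j => h i j

theorem stmt5_general {h : ℕ → ℕ → ℝ} (hdet : ∀ n, 0 < (truncation h (n + 1)).det)
    (hstp : ∀ n, ∃ p, IsStrictlyTotallyPos (truncation h (n + 1) ^ p)) :
    ∃ x : (n : ℕ) → Fin n → ℝ,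
      (∀ n, StrictMono (x n)) ∧
      (∀ n k, 0 < x n k) ∧
      (∀ n, (truncation h n).charpoly = ∏ k, (X - C (x n k))) ∧
      (∀ n (k : Fin n), x (n + 1) k.castSucc < x n k ∧ x n k < x (n + 1) k.succ) := by
  have hroots (n : ℕ) : ∃ y : Fin n → ℝ, StrictMono y ∧
      (truncation h n).charpoly = ∏ k, (X - C (y k)) := by
    cases n with
    | zero => exact ⟨Fin.elim0, fun i => i.elim0, by simp [Matrix.charpoly]⟩
    | succ n => exact exists_strictMono_charpoly_eq_prod (hstp n).choose_spec
  choose x hmono hchar using hroots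
  have hinterlace (n : ℕ) (k : Fin n) : x n k ∈ Set.Ioo (x (n + 1) k.castSucc) (x (n + 1) k.succ) :=
    interlace_of_charpoly_eq_prod (hstp n).choose_spec (hmono n) (hmono (n + 1)) (hchar n)
      (hchar (n + 1)) k
  refine ⟨x, hmono, fun n => ?_, hchar, hinterlace⟩
  induction n with
  | zero => exact fun k => k.elim0
  | succ n ih =>
    refine forall_pos_of_prod_pos ?_ fun k => (ih k).trans (hinterlace n k).2
    exact det_eq_prod_of_charpoly_eq_prod (hchar (n + 1)) ▸ hdet n

/-- If all the truncations `H_n` of an `(m+2)`-banded unit-lower-Hessenberg real matrix are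
oscillation matrices, then each characteristic polynomial `P_n(x) = det(x·I_n − H_n)` has
`n` distinct roots, all real and positive, and the roots of consecutive polynomials
strictly interlace. -/
theorem stmt5 (m : ℕ) (hm : 1 ≤ m) (h : ℕ → ℕ → ℝ)
    (hsup : ∀ n, h n (n + 1) = 1)
    (hband : ∀ n k, (n + 2 ≤ k ∨ k + m + 1 ≤ n) → h n k = 0)
    (hosc : ∀ n : ℕ, 1 ≤ n →
      IsOscillation (Matrix.of fun i j : Fin n => h (i : ℕ) (j : ℕ))) :
    ∃ x : (n : ℕ) → Fin n → ℝ,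
      (∀ n, StrictMono (x n)) ∧
      (∀ n k, 0 < x n k) ∧
      (∀ n : ℕ, 1 ≤ n →
        Matrix.charpoly (Matrix.of fun i j : Fin n => h (i : ℕ) (j : ℕ))
          = ∏ k : Fin n, (X - C (x n k))) ∧
      (∀ n (k : Fin n), x (n + 1) k.castSucc < x n k ∧ x n k < x (n + 1) k.succ) := by
  obtain ⟨x, hmono, hpos, hchar, hinterlace⟩ := stmt5_general
    (fun n => (hosc (n + 1) n.succ_pos).det_pos)
    fun n => (hosc (n + 1) n.succ_pos).2.imp fun _ => And.right
  exact ⟨x, hmono, hpos, fun n _ => hchar n, hinterlace⟩
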